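/- Let A_1,…,A_k (k ≥ 1) be pairwise commuting V×V matrices with nonnegative integer entries, each with no zero row and no zero column, such that every strongly connected component is nontrivial and coordinatewise irreducible. Suppose D is a strongly connected component which is hereditary as a subset of V, and suppose that for every strongly connected component C and every i ∈ {1,…,k} there exist v ∈ C and w ∈ D with A_i(v,w) > 0. If there exists j ∈ {1,…,k} such that ρ(A_{C,j}) < ρ(A_{D,j}) for every strongly connected component C ≠ D, then ρ(A_{C,i}) < ρ(A_{D,i}) for every strongly connected component C ≠ D and every i ∈ {1,…,k}. -/

import Mathlib

open Matrix

variable {V : Type*} [Fintype V] [DecidableEq V]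

/-- `Apow A n = ∏ i, (A i)^(n i)`, the vertex matrix counting paths of degree `n`. -/
def Apow {k : ℕ} (A : Fin k → Matrix V V ℕ) (n : Fin k → ℕ) : Matrix V V ℕ :=
  ((List.finRange k).map fun i => (A i) ^ (n i)).prod

/-- `v` reaches `w` if some `A^n` has a positive `(v, w)` entry. -/
def Reaches {k : ℕ} (A : Fin k → Matrix V V ℕ) (v w : V) : Prop :=
  ∃ n : Fin k → ℕ, 0 < Apow A n v w

/-- `C` is a strongly connected component: the equivalence class of some vertex `v`
for the relation `v` reaches `w` and `w` reaches `v`. -/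
def IsSCC {k : ℕ} (A : Fin k → Matrix V V ℕ) (C : Finset V) : Prop :=
  ∃ v : V, ∀ w : V, w ∈ C ↔ (Reaches A v w ∧ Reaches A w v)

/-- A component is nontrivial if it contains a vertex with a loop of nonzero degree. -/
def NontrivialComp {k : ℕ} (A : Fin k → Matrix V V ℕ) (C : Finset V) : Prop :=
  ∃ v ∈ C, ∃ n : Fin k → ℕ, n ≠ 0 ∧ 0 < Apow A n v v

/-- A component is coordinatewise irreducible if for each colour `i` and all `v, w ∈ C`
there is `m ≥ 1` with `(A_i^m)(v, w) > 0`. -/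
def CoordIrreducible {k : ℕ} (A : Fin k → Matrix V V ℕ) (C : Finset V) : Prop :=
  ∀ i : Fin k, ∀ v ∈ C, ∀ w ∈ C, ∃ m : ℕ, 1 ≤ m ∧ 0 < ((A i) ^ m) v w

/-- A subset `S` is hereditary if `v ∈ S` and `v` reaches `w` imply `w ∈ S`. -/
def Hereditary {k : ℕ} (A : Fin k → Matrix V V ℕ) (S : Finset V) : Prop :=
  ∀ v ∈ S, ∀ w : V, Reaches A v w → w ∈ S

/-- The spectral radius of a square matrix of natural numbers: the maximum modulus of
its complex eigenvalues. -/
noncomputable def specRadN {n : Type*} [Fintype n] [DecidableEq n] (M : Matrix n n ℕ) : ℝ :=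
  (spectralRadius ℂ (M.map (Nat.cast : ℕ → ℂ))).toReal

/-- `compRad A C i` is the spectral radius of the `C × C` submatrix of `A i`. -/
noncomputable def compRad {k : ℕ} (A : Fin k → Matrix V V ℕ) (C : Finset V) (i : Fin k) : ℝ :=
  specRadN ((A i).submatrix (fun c : {x // x ∈ C} => c.1) (fun c : {x // x ∈ C} => c.1))

/-! Let `ρ = ρ(A_{D,j})`. A commuting nonnegative family whose combined graph is strongly connected
commutes with an entrywise positive matrix, so Perron's theorem for that one matrix gives the
family common positive left and right eigenvectors, whose eigenvalues are the spectral radii.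

Domination in the colour `j` makes `ρ - A_j` injective on the vectors vanishing on `D`: a
nonnegative `u ≠ 0` with `ρ u ≤ A_j u` would force `ρ ≤ ρ(A_{C,j})` for a component `C` meeting its
support. So the common eigenvector of the blocks on `D` extends uniquely to an eigenvector `x` of
`A_j`, which is nonnegative for the same reason and, by uniqueness, is an eigenvector of every
`A_i` with eigenvalue `ρ(A_{D,i})`. An edge of colour `i` from `C` to `D` makes
`A_{C,i} x ≤ ρ(A_{D,i}) x` strict somewhere on `C`, and pairing with the positive left eigenvector
of `A_{C,i}` gives `ρ(A_{C,i}) < ρ(A_{D,i})`. -/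

open Relation Filter Topology

section PositiveVectors

variable {m n R : Type*} [Fintype n] [Semiring R] [PartialOrder R]

lemma dotProduct_pos_of_forall_pos [IsStrictOrderedRing R] {x u : n → R} (hx : ∀ v, 0 < x v)
    (hu : 0 < u) : 0 < x ⬝ᵥ u := by
  obtain ⟨hu0, v, hv⟩ := Pi.lt_def.mp hu
  exact Finset.sum_pos' (fun w _ => mul_nonneg (hx w).le (hu0 w))
    ⟨v, Finset.mem_univ v, mul_pos (hx v) hv⟩

lemma mulVec_mono_of_nonneg [IsOrderedRing R] {M : Matrix m n R} (hM : ∀ v w, 0 ≤ M v w)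
    {x y : n → R} (hxy : x ≤ y) : M *ᵥ x ≤ M *ᵥ y :=
  fun v => dotProduct_le_dotProduct_of_nonneg_left hxy (hM v)

lemma mulVec_nonneg_of_nonneg [IsOrderedRing R] {M : Matrix m n R} (hM : ∀ v w, 0 ≤ M v w)
    {x : n → R} (hx : 0 ≤ x) : 0 ≤ M *ᵥ x :=
  fun v => dotProduct_nonneg_of_nonneg (hM v) hx

end PositiveVectors

section Perron

variable {n : Type*}

lemma exists_gt_smul_le_of_forall_lt [Finite n] {s : ℝ} {z w : n → ℝ} (h : ∀ v, s * z v < w v) :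
    ∃ t > s, t • z ≤ w := by
  have hlt : ∀ᶠ t in 𝓝[>] s, ∀ v, t * z v < w v := eventually_all.2 fun v =>
    ((continuous_mul_const (z v)).continuousAt.eventually_lt continuousAt_const (h v)).filter_mono
      nhdsWithin_le_nhds
  obtain ⟨t, ht, hst⟩ := (hlt.and self_mem_nhdsWithin).exists
  exact ⟨t, hst, fun v => (ht v).le⟩

variable [Fintype n]

section Field

variable {K : Type*} [Field K] [LinearOrder K] [IsStrictOrderedRing K]

lemma inv_sum_smul_mem_stdSimplex {y : n → K} (hy : 0 < y) :
    (∑ v, y v)⁻¹ • y ∈ stdSimplex K n := by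
  have hsum : 0 < ∑ v, y v := Fintype.sum_pos hy
  refine ⟨fun v => mul_nonneg (inv_nonneg.2 hsum.le) (hy.le v), ?_⟩
  simp only [Pi.smul_apply, smul_eq_mul, ← Finset.mul_sum, inv_mul_cancel₀ hsum.ne']

lemma le_sum_of_smul_le_mulVec {M : Matrix n n K} (hM : ∀ v w, 0 ≤ M v w) {t : K} {x : n → K}
    (hx : x ∈ stdSimplex K n) (h : t • x ≤ M *ᵥ x) : t ≤ ∑ v, ∑ w, M v w :=
  calc t = ∑ v, (t • x) v := by simp only [Pi.smul_apply, smul_eq_mul, ← Finset.mul_sum, hx.2,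
        mul_one]
    _ ≤ ∑ v, (M *ᵥ x) v := Finset.sum_le_sum fun v _ => h v
    _ ≤ ∑ v, ∑ w, M v w := Finset.sum_le_sum fun v _ => Finset.sum_le_sum fun w _ =>
        mul_le_of_le_one_right (hM v w) (mem_Icc_of_mem_stdSimplex hx w).2

lemma exists_eq_smul_of_mulVec_eq_smul {P : Matrix n n K} (hP : ∀ v w, 0 < P v w) {s : K}
    {x y : n → K} (hx : ∀ v, 0 < x v) (hPx : P *ᵥ x = s • x) (hPy : P *ᵥ y = s • y) :
    ∃ r : K, y = r • x := by
  rcases isEmpty_or_nonempty n with _ | _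
  · exact ⟨0, Subsingleton.elim _ _⟩
  obtain ⟨v₀, hv₀⟩ := Finite.exists_min fun v => y v / x v
  set r := y v₀ / x v₀
  have hz0 : 0 ≤ y - r • x := fun v => sub_nonneg.2 ((le_div_iff₀ (hx v)).1 (hv₀ v))
  have hz : (y - r • x) v₀ = 0 := sub_eq_zero.2 (div_mul_cancel₀ _ (hx v₀).ne').symm
  have hPz : P *ᵥ (y - r • x) = s • (y - r • x) := by
    rw [mulVec_sub, mulVec_smul, hPx, hPy, smul_sub, smul_comm]
  refine ⟨r, sub_eq_zero.1 (by_contra fun hne => ?_)⟩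
  have hpos : 0 < (P *ᵥ (y - r • x)) v₀ :=
    dotProduct_pos_of_forall_pos (hP v₀) (lt_of_le_of_ne' hz0 hne)
  simp [hPz, hz] at hpos

end Field

lemma exists_maximal_smul_le_mulVec [Nonempty n] {M : Matrix n n ℝ} (hM : ∀ v w, 0 ≤ M v w) :
    ∃ (s : ℝ) (x : n → ℝ), 0 < x ∧ s • x ≤ M *ᵥ x ∧
      ∀ (t : ℝ) (y : n → ℝ), 0 < y → t • y ≤ M *ᵥ y → t ≤ s := by
  classical
  let K : Set (ℝ × (n → ℝ)) :=
    (Set.Icc 0 (∑ v, ∑ w, M v w) ×ˢ stdSimplex ℝ n) ∩ {p | p.1 • p.2 ≤ M *ᵥ p.2}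
  have hK : IsCompact K := (isCompact_Icc.prod (isCompact_stdSimplex ℝ n)).inter_right <|
    isClosed_le (by fun_prop) (by fun_prop)
  have mem_K {t : ℝ} {x : n → ℝ} (ht : 0 ≤ t) (hx : x ∈ stdSimplex ℝ n)
      (h : t • x ≤ M *ᵥ x) : (t, x) ∈ K :=
    ⟨⟨⟨ht, le_sum_of_smul_le_mulVec hM hx h⟩, hx⟩, h⟩
  obtain ⟨v⟩ := ‹Nonempty n›
  have hv := single_mem_stdSimplex ℝ v
  have hKne : K.Nonempty := ⟨_, mem_K le_rfl hv (by
    simpa only [zero_smul] using mulVec_nonneg_of_nonneg hM hv.1)⟩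
  obtain ⟨⟨s, x⟩, ⟨⟨hs, hx⟩, hsx⟩, hmax⟩ := hK.exists_isMaxOn hKne continuous_fst.continuousOn
  have hx0 : x ≠ 0 := by
    rintro rfl
    simpa using hx.2
  refine ⟨s, x, lt_of_le_of_ne hx.1 hx0.symm, hsx, fun t y hy hty => ?_⟩
  rcases le_total t 0 with ht | ht
  · exact ht.trans hs.1
  refine hmax (mem_K ht (inv_sum_smul_mem_stdSimplex hy) ?_)
  rw [smul_comm, mulVec_smul]
  exact smul_le_smul_of_nonneg_left hty (inv_nonneg.2 (Finset.sum_nonneg fun v _ => hy.le v))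

/-- Existence part of Perron's theorem: the largest `s` with `s x ≤ P x` for some `x > 0` is an
eigenvalue, as otherwise `P x` would satisfy the inequality strictly. -/
lemma exists_pos_mulVec_eq_smul [Nonempty n] {P : Matrix n n ℝ} (hP : ∀ v w, 0 < P v w) :
    ∃ (s : ℝ) (x : n → ℝ), (∀ v, 0 < x v) ∧ P *ᵥ x = s • x := by
  obtain ⟨s, x, hx, hsx, hmax⟩ := exists_maximal_smul_le_mulVec fun v w => (hP v w).le
  have hPx : P *ᵥ x = s • x := by
    by_contra hne
    have hlt (v : n) : s * (P *ᵥ x) v < (P *ᵥ (P *ᵥ x)) v := by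
      have := dotProduct_pos_of_forall_pos (hP v) (sub_pos.2 (lt_of_le_of_ne' hsx hne))
      rw [dotProduct_sub, dotProduct_smul] at this
      exact sub_pos.1 this
    obtain ⟨t, hst, ht⟩ := exists_gt_smul_le_of_forall_lt hlt
    refine hst.not_ge (hmax t _ ?_ ht)
    obtain ⟨v⟩ := ‹Nonempty n›
    exact Pi.lt_def.2 ⟨fun w => (dotProduct_pos_of_forall_pos (hP w) hx).le, v,
      dotProduct_pos_of_forall_pos (hP v) hx⟩
  refine ⟨s, x, fun v => (hx.le v).lt_of_ne' fun hv => ?_, hPx⟩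
  have hpos : 0 < (P *ᵥ x) v := dotProduct_pos_of_forall_pos (hP v) hx
  simp [hPx, hv] at hpos

end Perron

section SpectralRadius

variable {n : Type*} [Fintype n]

section Field

variable {K : Type*} [Field K] [LinearOrder K] [IsStrictOrderedRing K]

lemma le_of_vecMul_eq_smul_of_smul_le_mulVec {M : Matrix n n K} {y u : n → K} {s t : K}
    (hy : ∀ v, 0 < y v) (hyM : y ᵥ* M = s • y) (hu : 0 < u) (htu : t • u ≤ M *ᵥ u) : t ≤ s := by
  refine le_of_mul_le_mul_right ?_ (dotProduct_pos_of_forall_pos hy hu)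
  calc t * (y ⬝ᵥ u) = y ⬝ᵥ t • u := (dotProduct_smul t y u).symm
    _ ≤ y ⬝ᵥ M *ᵥ u := dotProduct_le_dotProduct_of_nonneg_left htu fun v => (hy v).le
    _ = s * (y ⬝ᵥ u) := by rw [dotProduct_mulVec, hyM, smul_dotProduct, smul_eq_mul]

lemma lt_of_vecMul_eq_smul_of_mulVec_lt_smul {M : Matrix n n K} {y x : n → K} {s r : K}
    (hy : ∀ v, 0 < y v) (hyM : y ᵥ* M = s • y) (hx : 0 ≤ x) (hMx : M *ᵥ x < r • x) : s < r := by
  refine lt_of_mul_lt_mul_right ?_ (dotProduct_nonneg_of_nonneg (fun v => (hy v).le) hx)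
  calc s * (y ⬝ᵥ x) = y ⬝ᵥ M *ᵥ x := by rw [dotProduct_mulVec, hyM, smul_dotProduct, smul_eq_mul]
    _ < y ⬝ᵥ r • x := by
      rw [← sub_pos, ← dotProduct_sub]
      exact dotProduct_pos_of_forall_pos hy (sub_pos.2 hMx)
    _ = r * (y ⬝ᵥ x) := dotProduct_smul r y x

end Field

lemma norm_smul_le_mulVec_norm {M : Matrix n n ℝ} (hM : ∀ v w, 0 ≤ M v w) {l : ℂ} {u : n → ℂ}
    (hu : M.map ((↑) : ℝ → ℂ) *ᵥ u = l • u) :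
    (‖l‖ • fun v => ‖u v‖) ≤ M *ᵥ fun v => ‖u v‖ := fun v =>
  calc ‖l‖ * ‖u v‖ = ‖∑ w, (M v w : ℂ) * u w‖ := by
        rw [← norm_mul]
        exact congrArg norm (congrFun hu v).symm
    _ ≤ ∑ w, ‖(M v w : ℂ) * u w‖ := norm_sum_le _ _
    _ = ∑ w, M v w * ‖u w‖ := Finset.sum_congr rfl fun w _ => by
        rw [norm_mul, Complex.norm_real, Real.norm_of_nonneg (hM v w)]

variable [DecidableEq n]

/-- The spectral radius of a real square matrix, computed from its complex eigenvalues. -/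
noncomputable def specRad (M : Matrix n n ℝ) : ℝ :=
  (spectralRadius ℂ (M.map ((↑) : ℝ → ℂ))).toReal

lemma specRad_eq_of_mem_of_forall_le {M : Matrix n n ℝ} {s : ℝ} (hs : 0 ≤ s)
    (hmem : (s : ℂ) ∈ spectrum ℂ (M.map ((↑) : ℝ → ℂ)))
    (hle : ∀ l ∈ spectrum ℂ (M.map ((↑) : ℝ → ℂ)), ‖l‖ ≤ s) : specRad M = s := by
  have h : spectralRadius ℂ (M.map ((↑) : ℝ → ℂ)) = ENNReal.ofReal s := by
    refine le_antisymm (iSup₂_le fun l hl => ?_) ?_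
    · rw [← enorm_eq_nnnorm, ← ofReal_norm]
      exact ENNReal.ofReal_le_ofReal (hle l hl)
    · refine le_trans (le_of_eq ?_) (le_iSup₂ (α := ENNReal) (s : ℂ) hmem)
      rw [← enorm_eq_nnnorm, ← ofReal_norm, Complex.norm_real, Real.norm_of_nonneg hs]
  rw [specRad, h, ENNReal.toReal_ofReal hs]

lemma mem_spectrum_iff_exists_mulVec {K : Type*} [Field K] {M : Matrix n n K} {l : K} :
    l ∈ spectrum K M ↔ ∃ u ≠ 0, M *ᵥ u = l • u := by
  rw [mem_spectrum_iff_isRoot_charpoly, Polynomial.IsRoot.def, eval_charpoly,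
    ← exists_mulVec_eq_zero_iff]
  refine exists_congr fun u => and_congr_right fun _ => ?_
  rw [sub_mulVec, scalar_apply, ← smul_one_eq_diagonal, smul_mulVec, one_mulVec, sub_eq_zero,
    eq_comm]

lemma mem_spectrum_iff_exists_vecMul {K : Type*} [Field K] {M : Matrix n n K} {l : K} :
    l ∈ spectrum K M ↔ ∃ u ≠ 0, u ᵥ* M = l • u := by
  rw [mem_spectrum_iff_isRoot_charpoly, ← charpoly_transpose, ← mem_spectrum_iff_isRoot_charpoly,
    mem_spectrum_iff_exists_mulVec]
  simp only [mulVec_transpose]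

lemma specRad_eq_of_pos_vecMul_eq_smul [Nonempty n] {M : Matrix n n ℝ} (hM : ∀ v w, 0 ≤ M v w)
    {y : n → ℝ} {s : ℝ} (hy : ∀ v, 0 < y v) (hyM : y ᵥ* M = s • y) : specRad M = s := by
  obtain ⟨v₀⟩ := ‹Nonempty n›
  have hs : 0 ≤ s := by
    have h : 0 ≤ (y ᵥ* M) v₀ := Finset.sum_nonneg fun w _ => mul_nonneg (hy w).le (hM w v₀)
    rw [hyM] at h
    exact nonneg_of_mul_nonneg_left h (hy v₀)
  refine specRad_eq_of_mem_of_forall_le hs ?_ fun l hl => ?_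
  · refine mem_spectrum_iff_exists_vecMul.2 ⟨fun v => (y v : ℂ), fun h => ?_, ?_⟩
    · exact (hy v₀).ne' (Complex.ofReal_eq_zero.1 (congrFun h v₀))
    · ext v
      simpa [vecMul, dotProduct] using congrArg ((↑) : ℝ → ℂ) (congrFun hyM v)
  · obtain ⟨u, hu, hul⟩ := mem_spectrum_iff_exists_mulVec.1 hl
    obtain ⟨v, hv⟩ := Function.ne_iff.1 hu
    exact le_of_vecMul_eq_smul_of_smul_le_mulVec hy hyM
      (Pi.lt_def.2 ⟨fun w => norm_nonneg (u w), v, norm_pos_iff.2 hv⟩)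
      (norm_smul_le_mulVec_norm hM hul)

end SpectralRadius

/-- The union over all colours `i` of the edges of the graphs of the matrices `A i`. -/
def Adj {ι n R : Type*} [Zero R] (A : ι → Matrix n n R) (v w : n) : Prop :=
  ∃ i, A i v w ≠ 0

section CommutingFamily

variable {ι n : Type*} [Fintype n]

section OrderedSemiring

variable {R : Type*} [Semiring R] [PartialOrder R] [IsStrictOrderedRing R] {M : ι → Matrix n n R}

lemma exists_nonneg_commute_apply_pos (hM : ∀ i v w, 0 ≤ M i v w)
    (hcomm : ∀ i j, Commute (M i) (M j)) {v w : n} (h : ReflTransGen (Adj M) v w) :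
    ∃ Q : Matrix n n R, (∀ i, Commute (M i) Q) ∧ (∀ a b, 0 ≤ Q a b) ∧ 0 < Q v w := by
  classical
  induction h with
  | refl =>
    refine ⟨1, fun i => Commute.one_right _, fun a b => ?_, by simp⟩
    rw [one_apply]
    split_ifs
    exacts [zero_le_one, le_rfl]
  | @tail u w _ huw ih =>
    obtain ⟨Q, hQcomm, hQ, hQpos⟩ := ih
    obtain ⟨i, hi⟩ := huw
    have hterm (a b c : n) : 0 ≤ Q a c * M i c b := mul_nonneg (hQ a c) (hM i c b)
    exact ⟨Q * M i, fun j => (hQcomm j).mul_right (hcomm j i),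
      fun a b => Finset.sum_nonneg fun c _ => hterm a b c,
      Finset.sum_pos' (fun c _ => hterm v w c)
        ⟨u, Finset.mem_univ u, mul_pos hQpos ((hM i u w).lt_of_ne' hi)⟩⟩

lemma exists_pos_commute (hM : ∀ i v w, 0 ≤ M i v w) (hcomm : ∀ i j, Commute (M i) (M j))
    (hconn : ∀ v w, ReflTransGen (Adj M) v w) :
    ∃ P : Matrix n n R, (∀ i, Commute (M i) P) ∧ ∀ v w, 0 < P v w := by
  choose Q hQcomm hQ hQpos using fun v w => exists_nonneg_commute_apply_pos hM hcomm (hconn v w)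
  refine ⟨∑ p : n × n, Q p.1 p.2, fun i => Commute.sum_right _ _ _ fun p _ => hQcomm p.1 p.2 i,
    fun v w => ?_⟩
  rw [Matrix.sum_apply]
  exact Finset.sum_pos' (fun p _ => hQ p.1 p.2 v w) ⟨(v, w), Finset.mem_univ _, hQpos v w⟩

end OrderedSemiring

variable {M : ι → Matrix n n ℝ}

lemma exists_common_pos_mulVec_eq_smul [Nonempty n] (hM : ∀ i v w, 0 ≤ M i v w)
    (hcomm : ∀ i j, Commute (M i) (M j)) (hconn : ∀ v w, ReflTransGen (Adj M) v w) :
    ∃ x : n → ℝ, (∀ v, 0 < x v) ∧ ∀ i, ∃ r : ℝ, M i *ᵥ x = r • x := by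
  obtain ⟨P, hPcomm, hP⟩ := exists_pos_commute hM hcomm hconn
  obtain ⟨s, x, hx, hPx⟩ := exists_pos_mulVec_eq_smul hP
  refine ⟨x, hx, fun i => exists_eq_smul_of_mulVec_eq_smul hP hx hPx ?_⟩
  rw [mulVec_mulVec, ← (hPcomm i).eq, ← mulVec_mulVec, hPx, mulVec_smul]

variable [DecidableEq n]

lemma exists_common_pos_vecMul_eq_specRad_smul [Nonempty n] (hM : ∀ i v w, 0 ≤ M i v w)
    (hcomm : ∀ i j, Commute (M i) (M j)) (hconn : ∀ v w, ReflTransGen (Adj M) v w) :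
    ∃ y : n → ℝ, (∀ v, 0 < y v) ∧ ∀ i, y ᵥ* M i = specRad (M i) • y := by
  obtain ⟨y, hy, hyM⟩ := exists_common_pos_mulVec_eq_smul (M := fun i => (M i)ᵀ)
    (fun i v w => hM i w v)
    (fun i j => by simp only [Commute, SemiconjBy, ← transpose_mul, (hcomm j i).eq])
    (fun v w => reflTransGen_swap.2 (hconn w v))
  refine ⟨y, hy, fun i => ?_⟩
  obtain ⟨s, hs⟩ := hyM i
  rw [mulVec_transpose] at hs
  rw [specRad_eq_of_pos_vecMul_eq_smul (hM i) hy hs, hs]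

lemma exists_common_pos_mulVec_eq_specRad_smul [Nonempty n] (hM : ∀ i v w, 0 ≤ M i v w)
    (hcomm : ∀ i j, Commute (M i) (M j)) (hconn : ∀ v w, ReflTransGen (Adj M) v w) :
    ∃ x : n → ℝ, (∀ v, 0 < x v) ∧ ∀ i, M i *ᵥ x = specRad (M i) • x := by
  obtain ⟨x, hx, hMx⟩ := exists_common_pos_mulVec_eq_smul hM hcomm hconn
  obtain ⟨y, hy, hyM⟩ := exists_common_pos_vecMul_eq_specRad_smul hM hcomm hconn
  refine ⟨x, hx, fun i => ?_⟩
  obtain ⟨r, hr⟩ := hMx i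
  obtain ⟨v⟩ := ‹Nonempty n›
  have hyx : 0 < y ⬝ᵥ x :=
    dotProduct_pos_of_forall_pos hy (Pi.lt_def.2 ⟨fun w => (hx w).le, v, hx v⟩)
  have hsr : specRad (M i) * (y ⬝ᵥ x) = r * (y ⬝ᵥ x) := by
    rw [← smul_eq_mul, ← smul_dotProduct, ← hyM, ← dotProduct_mulVec, hr, dotProduct_smul,
      smul_eq_mul]
  rw [hr, mul_right_cancel₀ hyx.ne' hsr]

end CommutingFamily

section Component

/-- The principal submatrix of `M` on the vertices in `C`. -/
def block {n R : Type*} (M : Matrix n n R) (C : Finset n) :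
    Matrix {x // x ∈ C} {x // x ∈ C} R :=
  M.submatrix Subtype.val Subtype.val

/-- `C` is a strongly connected component of the union of the graphs of the matrices `A i`. This is
`IsSCC` with reachability expressed through paths, which makes sense without finiteness or order of
the index set. -/
def IsComponent {ι n R : Type*} [Zero R] (A : ι → Matrix n n R) (C : Finset n) : Prop :=
  ∃ v, ∀ w, w ∈ C ↔ ReflTransGen (Adj A) v w ∧ ReflTransGen (Adj A) w v

lemma exists_isComponent_mem {ι n R : Type*} [Finite n] [Zero R] (A : ι → Matrix n n R) (v : n) :
    ∃ C, IsComponent A C ∧ v ∈ C := by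
  refine ⟨(Set.toFinite {w | ReflTransGen (Adj A) v w ∧ ReflTransGen (Adj A) w v}).toFinset,
    ⟨v, fun w => Set.Finite.mem_toFinset _⟩, ?_⟩
  exact (Set.Finite.mem_toFinset _).2 ⟨.refl, .refl⟩

namespace IsComponent

variable {ι n R : Type*}

section Zero

variable [Zero R] {A : ι → Matrix n n R} {C D : Finset n} {u v w : n}

lemma nonempty (hC : IsComponent A C) : Nonempty {x // x ∈ C} := by
  obtain ⟨v, hv⟩ := hC
  exact ⟨v, (hv v).2 ⟨.refl, .refl⟩⟩

lemma reflTransGen (hC : IsComponent A C) (hv : v ∈ C) (hw : w ∈ C) :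
    ReflTransGen (Adj A) v w := by
  obtain ⟨c, hc⟩ := hC
  exact ((hc v).1 hv).2.trans ((hc w).1 hw).1

lemma mem_of_reflTransGen (hC : IsComponent A C) (hu : u ∈ C) (hw : w ∈ C)
    (huv : ReflTransGen (Adj A) u v) (hvw : ReflTransGen (Adj A) v w) : v ∈ C := by
  obtain ⟨c, hc⟩ := hC
  exact (hc v).2 ⟨((hc u).1 hu).1.trans huv, hvw.trans ((hc w).1 hw).2⟩

lemma subset_of_mem_of_mem (hC : IsComponent A C) (hD : IsComponent A D) (hvC : v ∈ C)
    (hvD : v ∈ D) : C ⊆ D := fun _ hw =>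
  hD.mem_of_reflTransGen hvD hvD (hC.reflTransGen hvC hw) (hC.reflTransGen hw hvC)

lemma eq_of_mem_of_mem (hC : IsComponent A C) (hD : IsComponent A D) (hvC : v ∈ C)
    (hvD : v ∈ D) : C = D :=
  (hC.subset_of_mem_of_mem hD hvC hvD).antisymm (hD.subset_of_mem_of_mem hC hvD hvC)

lemma reflTransGen_block (hC : IsComponent A C) (v w : {x // x ∈ C}) :
    ReflTransGen (Adj fun i => block (A i) C) v w := by
  suffices ∀ u : n, ReflTransGen (Adj A) u w → ∀ hu : u ∈ C,
      ReflTransGen (Adj fun i => block (A i) C) ⟨u, hu⟩ w from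
    this v (hC.reflTransGen v.2 w.2) v.2
  intro u huw
  induction huw using ReflTransGen.head_induction_on with
  | refl => exact fun _ => .refl
  | @head a c hac hcw ih =>
    intro ha
    have hc : c ∈ C := hC.mem_of_reflTransGen ha w.2 (.single hac) hcw
    have hstep : Adj (fun i => block (A i) C) ⟨a, ha⟩ ⟨c, hc⟩ := hac
    exact .head hstep (ih hc)

end Zero

lemma block_mul [NonUnitalNonAssocSemiring R] [Fintype n] {A : ι → Matrix n n R} {C : Finset n}
    (hC : IsComponent A C) (i j : ι) : block (A i * A j) C = block (A i) C * block (A j) C := by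
  ext v w
  have hzero : ∀ u ∈ Finset.univ, u ∉ C → A i v u * A j u w = 0 := fun u _ hu => by
    by_contra hne
    exact hu (hC.mem_of_reflTransGen v.2 w.2 (.single ⟨i, left_ne_zero_of_mul hne⟩)
      (.single ⟨j, right_ne_zero_of_mul hne⟩))
  calc ∑ u, A i v u * A j u w = ∑ u ∈ C, A i v u * A j u w :=
        (Finset.sum_subset (Finset.subset_univ C) hzero).symm
    _ = ∑ u : {x // x ∈ C}, A i v u * A j u w := (Finset.sum_coe_sort C _).symm

lemma commute_block [NonUnitalNonAssocSemiring R] [Fintype n] {A : ι → Matrix n n R}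
    {C : Finset n} (hC : IsComponent A C) {i j : ι} (h : Commute (A i) (A j)) :
    Commute (block (A i) C) (block (A j) C) := by
  rw [Commute, SemiconjBy, ← hC.block_mul, h.eq, hC.block_mul]

variable [Fintype n] [DecidableEq n] {A : ι → Matrix n n ℝ} {C : Finset n}

lemma exists_pos_vecMul_block (hC : IsComponent A C) (hA : ∀ i v w, 0 ≤ A i v w)
    (hcomm : ∀ i j, Commute (A i) (A j)) :
    ∃ y : {x // x ∈ C} → ℝ, (∀ v, 0 < y v) ∧
      ∀ i, y ᵥ* block (A i) C = specRad (block (A i) C) • y :=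
  have := hC.nonempty
  exists_common_pos_vecMul_eq_specRad_smul (fun i v w => hA i v w)
    (fun i j => hC.commute_block (hcomm i j)) hC.reflTransGen_block

lemma exists_pos_mulVec_block (hC : IsComponent A C) (hA : ∀ i v w, 0 ≤ A i v w)
    (hcomm : ∀ i j, Commute (A i) (A j)) :
    ∃ x : {x // x ∈ C} → ℝ, (∀ v, 0 < x v) ∧
      ∀ i, block (A i) C *ᵥ x = specRad (block (A i) C) • x :=
  have := hC.nonempty
  exists_common_pos_mulVec_eq_specRad_smul (fun i v w => hA i v w)
    (fun i j => hC.commute_block (hcomm i j)) hC.reflTransGen_block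

end IsComponent

lemma mulVec_apply_eq_block_add_sum_compl {n R : Type*} [Fintype n] [DecidableEq n]
    [NonUnitalNonAssocSemiring R] (M : Matrix n n R) (C : Finset n) (u : n → R)
    (v : {x // x ∈ C}) :
    (M *ᵥ u) v = (block M C *ᵥ fun c => u c) v + ∑ w ∈ Cᶜ, M v w * u w := by
  have hblock : (block M C *ᵥ fun c => u c) v = ∑ w ∈ C, M v w * u w :=
    Finset.sum_coe_sort C fun w => M v w * u w
  rw [hblock, Finset.sum_add_sum_compl]
  rfl

lemma mulVec_apply_eq_block {n R : Type*} [Fintype n]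
    [NonUnitalNonAssocSemiring R] {M : Matrix n n R} {C : Finset n} {u : n → R}
    {v : {x // x ∈ C}} (h : ∀ w ∉ C, M v w * u w = 0) :
    (M *ᵥ u) v = (block M C *ᵥ fun c => u c) v := by
  classical
  rw [mulVec_apply_eq_block_add_sum_compl, Finset.sum_eq_zero fun w hw =>
    h w (Finset.mem_compl.1 hw), add_zero]

lemma mulVec_apply_eq_block_of_hereditary {ι n R : Type*} [Fintype n]
    [NonUnitalNonAssocSemiring R] {A : ι → Matrix n n R} {D : Finset n}
    (hDher : ∀ v ∈ D, ∀ w, Adj A v w → w ∈ D) (i : ι) (u : n → R) (v : {x // x ∈ D}) :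
    (A i *ᵥ u) v = (block (A i) D *ᵥ fun c => u c) v :=
  mulVec_apply_eq_block fun w hw => by
    by_contra hne
    exact hw (hDher v v.2 w ⟨i, left_ne_zero_of_mul hne⟩)

end Component

section Extension

lemma exists_map_eq_zero_sub_mem {K E : Type*} [DivisionRing K] [AddCommGroup E] [Module K E]
    {f : E →ₗ[K] E} {W : Submodule K E} [FiniteDimensional K W] (hW : ∀ w ∈ W, f w ∈ W)
    (hinj : ∀ w ∈ W, f w = 0 → w = 0) {e : E} (he : f e ∈ W) :
    ∃ x, f x = 0 ∧ e - x ∈ W := by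
  have hker : LinearMap.ker (f.restrict hW) = ⊥ := LinearMap.ker_eq_bot'.2 fun w hw =>
    Subtype.ext (hinj w w.2 (congrArg Subtype.val hw))
  obtain ⟨w, hw⟩ := LinearMap.injective_iff_surjective.1 (LinearMap.ker_eq_bot.1 hker) ⟨f e, he⟩
  have hfw : f w = f e := congrArg Subtype.val hw
  exact ⟨e - w, by rw [map_sub, hfw, sub_self], by rw [sub_sub_cancel]; exact w.2⟩

lemma exists_mem_forall_reflTransGen {α : Type*} [Finite α] (r : α → α → Prop) {s : Set α}
    (hs : s.Nonempty) :
    ∃ a ∈ s, ∀ b ∈ s, ReflTransGen r a b → ReflTransGen r b a := by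
  let below (b a : α) : Prop := ReflTransGen r a b ∧ ¬ReflTransGen r b a
  have : IsTrans α below :=
    ⟨fun _ _ _ hab hbc => ⟨hbc.1.trans hab.1, fun h => hab.2 (h.trans hbc.1)⟩⟩
  have : Std.Irrefl below := ⟨fun _ h => h.2 h.1⟩
  obtain ⟨a, ha, hmin⟩ := (Finite.wellFounded_of_trans_of_irrefl below).has_min s hs
  exact ⟨a, ha, fun b hb hab => of_not_not fun h => hmin b hb ⟨hab, h⟩⟩

variable {ι n : Type*} [Fintype n] [DecidableEq n] {A : ι → Matrix n n ℝ}

lemma exists_isComponent_le_specRad_block (hA : ∀ i v w, 0 ≤ A i v w)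
    (hcomm : ∀ i j, Commute (A i) (A j)) {j : ι} {ρ : ℝ} {u : n → ℝ} (hu : 0 < u)
    (hρu : ρ • u ≤ A j *ᵥ u) :
    ∃ C, IsComponent A C ∧ (∃ v ∈ C, u v ≠ 0) ∧ ρ ≤ specRad (block (A j) C) := by
  obtain ⟨v, hv, hback⟩ := exists_mem_forall_reflTransGen (Adj A) (Function.ne_iff.1 hu.ne')
  obtain ⟨C, hC, hvC⟩ := exists_isComponent_mem A v
  obtain ⟨y, hy, hyA⟩ := hC.exists_pos_vecMul_block hA hcomm
  have huC : 0 < fun c : {x // x ∈ C} => u c :=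
    Pi.lt_def.2 ⟨fun c => hu.le c, ⟨v, hvC⟩, (hu.le v).lt_of_ne' hv⟩
  refine ⟨C, hC, ⟨v, hvC, hv⟩,
    le_of_vecMul_eq_smul_of_smul_le_mulVec hy (hyA j) huC fun c => ?_⟩
  refine (hρu c).trans_eq (mulVec_apply_eq_block fun w hw => ?_)
  by_contra hne
  have hcw : Adj A c w := ⟨j, left_ne_zero_of_mul hne⟩
  have hvw := (hC.reflTransGen hvC c.2).tail hcw
  exact hw (hC.mem_of_reflTransGen hvC hvC hvw (hback w (right_ne_zero_of_mul hne) hvw))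

variable {D : Finset n} {j : ι}

lemma nonneg_of_mulVec_eq_smul (hA : ∀ i v w, 0 ≤ A i v w)
    (hcomm : ∀ i j, Commute (A i) (A j)) {ρ : ℝ}
    (hρ : ∀ C, IsComponent A C → C ≠ D → specRad (block (A j) C) < ρ) {x : n → ℝ}
    (hAx : A j *ᵥ x = ρ • x) (hxD : ∀ v ∈ D, 0 ≤ x v) : 0 ≤ x := by
  have hneg : ρ • x⁻ ≤ A j *ᵥ x⁻ := fun v => by
    rcases le_total 0 (x v) with hv | hv
    · simpa [negPart_of_nonneg hv] using mulVec_nonneg_of_nonneg (hA j) (negPart_nonneg x) v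
    · have h := mulVec_mono_of_nonneg (hA j) (neg_le_negPart x) v
      simpa [mulVec_neg, hAx, negPart_of_nonpos hv] using h
  rw [← negPart_eq_zero]
  by_contra hne
  obtain ⟨C, hC, ⟨v, hvC, hv⟩, hle⟩ :=
    exists_isComponent_le_specRad_block hA hcomm ((negPart_nonneg x).lt_of_ne' hne) hneg
  refine hle.not_gt (hρ C hC ?_)
  rintro rfl
  exact hv (negPart_of_nonneg (hxD v hvC))

lemma eq_zero_of_mulVec_eq_smul (hA : ∀ i v w, 0 ≤ A i v w)
    (hcomm : ∀ i j, Commute (A i) (A j)) {ρ : ℝ}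
    (hρ : ∀ C, IsComponent A C → C ≠ D → specRad (block (A j) C) < ρ) {x : n → ℝ}
    (hAx : A j *ᵥ x = ρ • x) (hxD : ∀ v ∈ D, x v = 0) : x = 0 := by
  refine le_antisymm (neg_nonneg.1 ?_) (nonneg_of_mulVec_eq_smul hA hcomm hρ hAx fun v hv =>
    (hxD v hv).ge)
  exact nonneg_of_mulVec_eq_smul hA hcomm hρ (by rw [mulVec_neg, hAx, smul_neg]) fun v hv =>
    (neg_eq_zero.2 (hxD v hv)).ge

lemma exists_mulVec_eq_smul_extending (hA : ∀ i v w, 0 ≤ A i v w)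
    (hcomm : ∀ i j, Commute (A i) (A j)) (hDher : ∀ v ∈ D, ∀ w, Adj A v w → w ∈ D) {ρ : ℝ}
    (hρ : ∀ C, IsComponent A C → C ≠ D → specRad (block (A j) C) < ρ) {z : {x // x ∈ D} → ℝ}
    (hz : block (A j) D *ᵥ z = ρ • z) :
    ∃ x : n → ℝ, A j *ᵥ x = ρ • x ∧ (fun v : {x // x ∈ D} => x v) = z := by
  let f : (n → ℝ) →ₗ[ℝ] n → ℝ := (A j).mulVecLin - ρ • LinearMap.id
  let W : Submodule ℝ (n → ℝ) := ⨅ v ∈ D, LinearMap.ker (LinearMap.proj v)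
  have mem_W {u : n → ℝ} : u ∈ W ↔ ∀ v ∈ D, u v = 0 := by simp [W]
  have f_apply {u : n → ℝ} (v : {x // x ∈ D}) :
      f u v = (block (A j) D *ᵥ fun c => u c) v - ρ * u v := by
    rw [← mulVec_apply_eq_block_of_hereditary hDher]
    rfl
  let e (v : n) : ℝ := if h : v ∈ D then z ⟨v, h⟩ else 0
  have he : (fun v : {x // x ∈ D} => e v) = z := funext fun v => dif_pos v.2
  obtain ⟨x, hfx, hx⟩ : ∃ x, f x = 0 ∧ e - x ∈ W := by
    refine exists_map_eq_zero_sub_mem (fun w hw => mem_W.2 fun v hv => ?_) (fun w hw hfw => ?_)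
      (mem_W.2 fun v hv => ?_)
    · have hw0 : (fun c : {x // x ∈ D} => w c) = 0 := funext fun c => mem_W.1 hw c c.2
      rw [f_apply ⟨v, hv⟩, hw0, mulVec_zero, mem_W.1 hw v hv, Pi.zero_apply, mul_zero, sub_zero]
    · exact eq_zero_of_mulVec_eq_smul hA hcomm hρ (sub_eq_zero.1 hfw) (mem_W.1 hw)
    · rw [f_apply ⟨v, hv⟩, he, hz, Pi.smul_apply, smul_eq_mul, ← congrFun he, sub_self]
  refine ⟨x, sub_eq_zero.1 hfx, ?_⟩
  rw [← he]
  exact funext fun v => (sub_eq_zero.1 (mem_W.1 hx v v.2)).symm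

lemma exists_common_eigenvector_of_dominates (hA : ∀ i v w, 0 ≤ A i v w)
    (hcomm : ∀ i j, Commute (A i) (A j)) (hD : IsComponent A D)
    (hDher : ∀ v ∈ D, ∀ w, Adj A v w → w ∈ D)
    (hj : ∀ C, IsComponent A C → C ≠ D → specRad (block (A j) C) < specRad (block (A j) D)) :
    ∃ x : n → ℝ, 0 ≤ x ∧ (∀ v ∈ D, 0 < x v) ∧
      ∀ i, A i *ᵥ x = specRad (block (A i) D) • x := by
  obtain ⟨z, hz, hAz⟩ := hD.exists_pos_mulVec_block hA hcomm
  obtain ⟨x, hAx, hxz⟩ := exists_mulVec_eq_smul_extending hA hcomm hDher hj (hAz j)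
  have hxD : ∀ v ∈ D, 0 < x v := fun v hv => (hz ⟨v, hv⟩).trans_eq (congrFun hxz ⟨v, hv⟩).symm
  refine ⟨x, nonneg_of_mulVec_eq_smul hA hcomm hj hAx fun v hv => (hxD v hv).le, hxD,
    fun i => sub_eq_zero.1 (eq_zero_of_mulVec_eq_smul hA hcomm hj ?_ fun v hv => ?_)⟩
  · rw [mulVec_sub, mulVec_mulVec, (hcomm j i).eq, ← mulVec_mulVec, mulVec_smul, hAx, mulVec_smul,
      smul_sub, smul_comm]
  · rw [Pi.sub_apply, mulVec_apply_eq_block_of_hereditary hDher i x ⟨v, hv⟩, hxz, hAz, ← hxz]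
    exact sub_self _

theorem dominance_all_colours_general (hA : ∀ i v w, 0 ≤ A i v w)
    (hcomm : ∀ i j, Commute (A i) (A j)) (hD : IsComponent A D)
    (hDher : ∀ v ∈ D, ∀ w, Adj A v w → w ∈ D)
    (hj : ∀ C, IsComponent A C → C ≠ D → specRad (block (A j) C) < specRad (block (A j) D))
    {C : Finset n} (hC : IsComponent A C) (hCD : C ≠ D) {i : ι}
    (hCi : ∃ v ∈ C, ∃ w ∈ D, A i v w ≠ 0) :
    specRad (block (A i) C) < specRad (block (A i) D) := by
  obtain ⟨x, hx, hxD, hAx⟩ := exists_common_eigenvector_of_dominates hA hcomm hD hDher hj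
  obtain ⟨y, hy, hyA⟩ := hC.exists_pos_vecMul_block hA hcomm
  obtain ⟨v, hvC, w, hwD, hvw⟩ := hCi
  have hwC : w ∈ Cᶜ := Finset.mem_compl.2 fun h => hCD (hC.eq_of_mem_of_mem hD h hwD)
  have hterm (a b : n) : 0 ≤ A i a b * x b := mul_nonneg (hA i a b) (hx b)
  have hsplit (c : {x // x ∈ C}) : specRad (block (A i) D) * x c =
      (block (A i) C *ᵥ fun c => x c) c + ∑ b ∈ Cᶜ, A i c b * x b := by
    rw [← mulVec_apply_eq_block_add_sum_compl, hAx, Pi.smul_apply, smul_eq_mul]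
  refine lt_of_vecMul_eq_smul_of_mulVec_lt_smul hy (hyA i)
    (x := fun c : {x // x ∈ C} => x c) (fun c => hx c) (Pi.lt_def.2 ⟨fun c => ?_, ⟨v, hvC⟩, ?_⟩)
  · exact (le_add_of_nonneg_right (Finset.sum_nonneg fun b _ => hterm c b)).trans_eq
      (hsplit c).symm
  · have hout : 0 < A i v w * x w := mul_pos ((hA i v w).lt_of_ne' hvw) (hxD w hwD)
    exact (lt_add_of_pos_right _ (Finset.sum_pos' (fun b _ => hterm v b) ⟨w, hwC, hout⟩)).trans_eq
      (hsplit ⟨v, hvC⟩).symm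

end Extension

section RealMatrices

variable {ι n : Type*} {A : ι → Matrix n n ℕ}

/-- The vertex matrices with their entries regarded as real numbers. -/
def realMatrices (A : ι → Matrix n n ℕ) (i : ι) : Matrix n n ℝ :=
  (A i).map (↑)

lemma adj_realMatrices : Adj (realMatrices A) = Adj A := by
  ext v w
  simp [Adj, realMatrices]

lemma commute_realMatrices [Fintype n] {i j : ι} (h : Commute (A i) (A j)) :
    Commute (realMatrices A i) (realMatrices A j) := by
  classical
  exact h.map (Nat.castRingHom ℝ).mapMatrix

lemma compRad_eq_specRad_block {k : ℕ} [DecidableEq n] (A : Fin k → Matrix n n ℕ) (C : Finset n)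
    (i : Fin k) : compRad A C i = specRad (block (realMatrices A i) C) := by
  simp only [compRad, specRadN, specRad, block, realMatrices, submatrix_map, Matrix.map_map]
  rfl

end RealMatrices

section VertexMatrices

variable {k : ℕ} {A : Fin k → Matrix V V ℕ}

/-- The matrices whose nonzero entries join vertices related by the preorder `r`. -/
def incidenceSubmonoid (R : Type*) {n : Type*} [Semiring R] [Fintype n] [DecidableEq n]
    (r : n → n → Prop) [IsPreorder n r] : Submonoid (Matrix n n R) where
  carrier := {M | ∀ v w, M v w ≠ 0 → r v w}
  one_mem' v w h := by
    obtain rfl : v = w := of_not_not fun hne => h (one_apply_ne hne)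
    exact refl v
  mul_mem' {M N} hM hN v w h := by
    obtain ⟨u, -, hu⟩ := Finset.exists_ne_zero_of_sum_ne_zero h
    exact _root_.trans (hM v u (left_ne_zero_of_mul hu)) (hN u w (right_ne_zero_of_mul hu))

lemma Reaches.reflTransGen {v w : V} (h : Reaches A v w) : ReflTransGen (Adj A) v w := by
  obtain ⟨m, hm⟩ := h
  have hmem : Apow A m ∈ incidenceSubmonoid ℕ (ReflTransGen (Adj A)) := by
    refine list_prod_mem fun M hM => ?_
    obtain ⟨i, -, rfl⟩ := List.mem_map.1 hM
    exact pow_mem (fun v w hvw => .single ⟨i, hvw⟩) (m i)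
  exact hmem v w hm.ne'

lemma Apow_eq_noncommProd (hcomm : ∀ i j, Commute (A i) (A j)) (m : Fin k → ℕ) :
    Apow A m = Finset.univ.noncommProd (fun i => A i ^ m i)
      fun i _ j _ _ => (hcomm i j).pow_pow (m i) (m j) :=
  (Multiset.noncommProd_coe _ _).symm

lemma Apow_add (hcomm : ∀ i j, Commute (A i) (A j)) (l m : Fin k → ℕ) :
    Apow A (l + m) = Apow A l * Apow A m := by
  simp only [Apow_eq_noncommProd hcomm, Pi.add_apply, pow_add]
  exact Finset.noncommProd_mul_distrib (fun i => A i ^ l i) (fun i => A i ^ m i) _ _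
    fun i _ j _ _ => (hcomm i j).pow_pow (m i) (l j)

lemma Apow_single (A : Fin k → Matrix V V ℕ) (i : Fin k) : Apow A (Pi.single i 1) = A i := by
  rw [Apow, List.prod_map_eq_pow_single i _ fun j hj _ => by rw [Pi.single_eq_of_ne hj, pow_zero],
    List.count_eq_one_of_mem (List.nodup_finRange k) (List.mem_finRange i), Pi.single_eq_same,
    pow_one, pow_one]

lemma reaches_of_reflTransGen (hcomm : ∀ i j, Commute (A i) (A j)) {v w : V}
    (h : ReflTransGen (Adj A) v w) : Reaches A v w := by
  induction h with
  | refl => exact ⟨0, by simp [Apow]⟩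
  | @tail u w _ huw ih =>
    obtain ⟨m, hm⟩ := ih
    obtain ⟨i, hi⟩ := huw
    refine ⟨m + Pi.single i 1, ?_⟩
    rw [Apow_add hcomm, Apow_single]
    exact Finset.sum_pos' (fun _ _ => Nat.zero_le _)
      ⟨u, Finset.mem_univ u, Nat.mul_pos hm (Nat.pos_of_ne_zero hi)⟩

lemma isSCC_iff_isComponent (hcomm : ∀ i j, Commute (A i) (A j)) {C : Finset V} :
    IsSCC A C ↔ IsComponent (realMatrices A) C := by
  have hreach (v w : V) : Reaches A v w ↔ ReflTransGen (Adj A) v w :=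
    ⟨Reaches.reflTransGen, reaches_of_reflTransGen hcomm⟩
  simp only [IsSCC, IsComponent, hreach, adj_realMatrices]

end VertexMatrices

/-- Theorem 4.2 of the paper: if the hereditary component `D` receives edges of every
colour from every component and dominates all other components in one colour `j`, then it
dominates in every colour. -/
theorem dominance_all_colours {V : Type*} [Fintype V] [DecidableEq V] [Nonempty V]
    {k : ℕ} (hk : 1 ≤ k)
    (A : Fin k → Matrix V V ℕ)
    (hcomm : ∀ i j, A i * A j = A j * A i)
    (hrow : ∀ i v, ∃ w, A i v w ≠ 0)
    (hcol : ∀ i v, ∃ w, A i w v ≠ 0)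
    (hcomp : ∀ C : Finset V, IsSCC A C → NontrivialComp A C ∧ CoordIrreducible A C)
    (D : Finset V) (hD : IsSCC A D) (hDher : Hereditary A D)
    (hconn : ∀ C : Finset V, IsSCC A C → ∀ i : Fin k, ∃ v ∈ C, ∃ w ∈ D, 0 < A i v w)
    (hj : ∃ j : Fin k, ∀ C : Finset V, IsSCC A C → C ≠ D →
      compRad A C j < compRad A D j) :
    ∀ C : Finset V, IsSCC A C → C ≠ D → ∀ i : Fin k,
      compRad A C i < compRad A D i := by
  obtain ⟨j, hj⟩ := hj
  intro C hC hCD i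
  obtain ⟨v, hv, w, hw, hvw⟩ := hconn C hC i
  simp only [isSCC_iff_isComponent hcomm, compRad_eq_specRad_block] at hC hD hj ⊢
  refine dominance_all_colours_general (A := realMatrices A)
    (fun i v w => Nat.cast_nonneg (A i v w))
    (fun i j => commute_realMatrices (hcomm i j)) hD (fun v hv w h => ?_) hj hC hCD
    ⟨v, hv, w, hw, Nat.cast_ne_zero.2 hvw.ne'⟩
  rw [adj_realMatrices] at h
  exact hDher v hv w (reaches_of_reflTransGen hcomm (.single h))
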